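/- For every real t ≠ 0, lim_{R→∞} (1/(2π))·∫_{−R}^{R} e^{iωt}·f̃_β(ω) dω = f_β(t); equivalently, lim_{R→∞} (1/(2π))·∫_{−R}^{R} cos(ωt)·f̃_β(ω) dω = f_β(t), since f̃_β is even. -/

import Mathlib

open MeasureTheory

/-- `f_β(t) = (2/(βπ))·log((e^{π|t|/β}+1)/(e^{π|t|/β}−1))`, defined for `t ≠ 0`. -/
noncomputable def arakiF (β t : ℝ) : ℝ :=
  (2 / (β * Real.pi)) *
    Real.log ((Real.exp (Real.pi * |t| / β) + 1) / (Real.exp (Real.pi * |t| / β) - 1))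

/-- `f̃_β(ω) = tanh(βω/2)/(βω/2)` for `ω ≠ 0`, and `f̃_β(0) = 1`. -/
noncomputable def qbpFtilde (β ω : ℝ) : ℝ :=
  if ω = 0 then 1 else Real.tanh (β * ω / 2) / (β * ω / 2)

/-!
The function `f̃_β` is not integrable, so Fourier inversion does not apply to it directly. Its
partial fraction expansion over the Matsubara frequencies `aₖ = (2k + 1)π / β`,
`f̃_β(ω) = ∑ₖ (8 / β²) / (ω² + aₖ²)`, reduces the claim to the integrable Lorentzians
`1 / (ω² + aₖ²)`, whose Fourier transforms are multiples of `exp (-aₖ |t|) / aₖ`; the resulting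
series is that of the logarithm in `f_β(t)`. Limit and sum may be interchanged because each
Lorentzian decreases on `[0, ∞)`: integrating by parts, its truncated cosine integral is at most
`2 / |t|` times its value at `0`, uniformly in the cutoff, and these values are summable.
-/

open Set Filter Topology
open scoped Real FourierTransform

section Dirichlet

variable {E : Type*} [NormedAddCommGroup E] [NormedSpace ℝ E] {a b C : ℝ} {g g' : ℝ → E}

lemma intervalIntegrable_deriv_of_antitoneOn {f : ℝ → ℝ} (hf : AntitoneOn f (uIcc a b)) :
    IntervalIntegrable (deriv f) volume a b := by
  simpa [Pi.neg_def, deriv.fun_neg'] using hf.neg.intervalIntegrable_deriv.neg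

lemma norm_integral_deriv_smul_le_of_antitoneOn {f : ℝ → ℝ} (hab : a ≤ b)
    (hfd : DifferentiableOn ℝ f (Icc a b)) (hf : AntitoneOn f (Icc a b))
    (hC : ∀ x ∈ Icc a b, ‖g x‖ ≤ C) :
    ‖∫ x in a..b, deriv f x • g x‖ ≤ C * (f a - f b) := by
  have hderiv : ∀ x ∈ Ioo a b, HasDerivAt f (deriv f x) x := fun x hx ↦
    (hfd.differentiableAt (Icc_mem_nhds hx.1 hx.2)).hasDerivAt
  have hderiv_nonpos : ∀ x ∈ Ioo a b, deriv f x ≤ 0 := fun x hx ↦ by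
    rw [← derivWithin_of_mem_nhds (Icc_mem_nhds hx.1 hx.2)]
    exact hf.derivWithin_nonpos
  have hint : IntervalIntegrable (deriv f) volume a b :=
    intervalIntegrable_deriv_of_antitoneOn (by rwa [uIcc_of_le hab])
  have hbound : ∀ᵐ x, x ∈ Ioc a b → ‖deriv f x • g x‖ ≤ -C * deriv f x := by
    filter_upwards [Measure.ae_ne volume b] with x hxb hx
    have hx' : x ∈ Ioo a b := ⟨hx.1, hx.2.lt_of_ne hxb⟩
    rw [norm_smul, Real.norm_of_nonpos (hderiv_nonpos x hx')]
    nlinarith [hC x (Ioo_subset_Icc_self hx'), hderiv_nonpos x hx']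
  calc ‖∫ x in a..b, deriv f x • g x‖
      ≤ ∫ x in a..b, -C * deriv f x :=
        intervalIntegral.norm_integral_le_of_norm_le hab hbound (hint.const_mul _)
    _ = -C * (f b - f a) := by
        rw [intervalIntegral.integral_const_mul,
          intervalIntegral.integral_eq_sub_of_hasDerivAt_of_le hab hfd.continuousOn hderiv hint]
    _ = C * (f a - f b) := by ring

lemma hasSum_intervalIntegral_smul_of_antitoneOn {ι : Type*} [Countable ι] {f : ι → ℝ → ℝ}
    {F : ℝ → ℝ} (hab : a ≤ b) (hfc : ∀ i, ContinuousOn (f i) (Icc a b))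
    (hf : ∀ i, AntitoneOn (f i) (Icc a b)) (hfb : ∀ i, 0 ≤ f i b) (hsum : Summable (f · a))
    (hF : ∀ x ∈ Ioc a b, HasSum (f · x) (F x)) (hg : IntervalIntegrable g volume a b) :
    HasSum (fun i ↦ ∫ x in a..b, f i x • g x) (∫ x in a..b, F x • g x) := by
  rw [← uIoc_of_le hab] at hF
  refine intervalIntegral.hasSum_integral_of_dominated_convergence
    (fun i x ↦ f i a * ‖g x‖) (fun i ↦ ?_) (fun i ↦ .of_forall fun x hx ↦ ?_)
    (.of_forall fun x _ ↦ hsum.mul_right _) ?_ (.of_forall fun x hx ↦ (hF x hx).smul_const (g x))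
  · rw [← uIcc_of_le hab] at hfc
    exact (hg.continuousOn_smul (hfc i)).def'.aestronglyMeasurable
  · rw [uIoc_of_le hab] at hx
    have hx' : x ∈ Icc a b := Ioc_subset_Icc_self hx
    have hfx : 0 ≤ f i x := (hfb i).trans (hf i hx' (right_mem_Icc.2 hab) hx.2)
    rw [norm_smul, Real.norm_of_nonneg hfx]
    gcongr
    exact hf i (left_mem_Icc.2 hab) hx' hx.1.le
  · simp_rw [tsum_mul_right]
    exact hg.norm.const_mul _

variable [CompleteSpace E]

lemma norm_integral_smul_deriv_le_of_antitoneOn {f : ℝ → ℝ} (hab : a ≤ b)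
    (hfd : DifferentiableOn ℝ f (Icc a b)) (hf : AntitoneOn f (Icc a b)) (hfb : 0 ≤ f b)
    (hg : ∀ x ∈ Icc a b, HasDerivAt g (g' x) x) (hg' : IntervalIntegrable g' volume a b)
    (hC : ∀ x ∈ Icc a b, ‖g x‖ ≤ C) :
    ‖∫ x in a..b, f x • g' x‖ ≤ 2 * C * f a := by
  have hparts : ∫ x in a..b, f x • g' x
      = f b • g b - f a • g a - ∫ x in a..b, deriv f x • g x := by
    refine intervalIntegral.integral_smul_deriv_eq_deriv_smul_of_hasDerivAt ?_ ?_ ?_ ?_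
      (intervalIntegrable_deriv_of_antitoneOn (by rwa [uIcc_of_le hab])) hg' <;>
      simp only [uIcc_of_le hab, min_eq_left hab, max_eq_right hab]
    · exact hfd.continuousOn
    · exact fun x hx ↦ (hg x hx).continuousAt.continuousWithinAt
    · exact fun x hx ↦ (hfd.differentiableAt (Icc_mem_nhds hx.1 hx.2)).hasDerivAt
    · exact fun x hx ↦ hg x (Ioo_subset_Icc_self hx)
  have hfa : 0 ≤ f a := hfb.trans (hf (left_mem_Icc.2 hab) (right_mem_Icc.2 hab) hab)
  calc ‖∫ x in a..b, f x • g' x‖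
      ≤ ‖f b • g b‖ + ‖f a • g a‖ + ‖∫ x in a..b, deriv f x • g x‖ := by
        rw [hparts]
        exact (norm_sub_le _ _).trans (by gcongr; exact norm_sub_le _ _)
    _ ≤ f b * C + f a * C + C * (f a - f b) := by
        rw [norm_smul, norm_smul, Real.norm_of_nonneg hfa, Real.norm_of_nonneg hfb]
        gcongr
        · exact hC b (right_mem_Icc.2 hab)
        · exact hC a (left_mem_Icc.2 hab)
        · exact norm_integral_deriv_smul_le_of_antitoneOn hab hfd hf hC
    _ = 2 * C * f a := by ring

lemma tendsto_integral_smul_deriv_of_hasSum_antitoneOn {ι : Type*} [Countable ι]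
    {f : ι → ℝ → ℝ} {F : ℝ → ℝ} {c : ι → E}
    (hfd : ∀ i, DifferentiableOn ℝ (f i) (Ici a)) (hf : ∀ i, AntitoneOn (f i) (Ici a))
    (hf0 : ∀ i, ∀ x ∈ Ici a, 0 ≤ f i x) (hsum : Summable (f · a))
    (hF : ∀ x ∈ Ioi a, HasSum (f · x) (F x))
    (hg : ∀ x ∈ Ici a, HasDerivAt g (g' x) x) (hg' : ∀ b, IntervalIntegrable g' volume a b)
    (hC : ∀ x ∈ Ici a, ‖g x‖ ≤ C)
    (hc : ∀ i, Tendsto (fun R ↦ ∫ x in a..R, f i x • g' x) atTop (𝓝 (c i))) :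
    Tendsto (fun R ↦ ∫ x in a..R, F x • g' x) atTop (𝓝 (∑' i, c i)) := by
  have hseries : ∀ᶠ R in atTop, ∑' i, ∫ x in a..R, f i x • g' x = ∫ x in a..R, F x • g' x := by
    filter_upwards [eventually_ge_atTop a] with R hR
    exact (hasSum_intervalIntegral_smul_of_antitoneOn hR
      (fun i ↦ (hfd i).continuousOn.mono Icc_subset_Ici_self)
      (fun i ↦ (hf i).mono Icc_subset_Ici_self)
      (fun i ↦ hf0 i R hR) hsum (fun x hx ↦ hF x hx.1) (hg' R)).tsum_eq
  refine (tendsto_tsum_of_dominated_convergence (hsum.mul_left (2 * C)) hc ?_).congr' hseries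
  filter_upwards [eventually_ge_atTop a] with R hR i
  exact norm_integral_smul_deriv_le_of_antitoneOn hR ((hfd i).mono Icc_subset_Ici_self)
    ((hf i).mono Icc_subset_Ici_self) (hf0 i R hR) (fun x hx ↦ hg x hx.1)
    (hg' R) (fun x hx ↦ hC x hx.1)

end Dirichlet

lemma intervalIntegral_neg_self_of_even {E : Type*} [NormedAddCommGroup E] [NormedSpace ℝ E]
    {f : ℝ → E} (hf : Function.Even f) (r : ℝ) :
    ∫ x in (-r)..r, f x = (2 : ℝ) • ∫ x in (0 : ℝ)..r, f x := by
  have hreflect : ∫ x in (-r)..0, f x = ∫ x in (0 : ℝ)..r, f x := by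
    simpa [hf _] using (intervalIntegral.integral_comp_neg (a := 0) (b := r) f).symm
  by_cases h : IntervalIntegrable f volume 0 r
  · have h' : IntervalIntegrable f volume (-r) 0 := by
      simpa [hf _] using ((IntervalIntegrable.iff_comp_neg).1 h).symm
    rw [← intervalIntegral.integral_add_adjacent_intervals h' h, hreflect, two_smul]
  · have h0 : (0 : ℝ) ∈ uIcc (-r) r := by
      rcases le_total 0 r with hr | hr
      · exact Icc_subset_uIcc ⟨by linarith, hr⟩
      · exact Icc_subset_uIcc' ⟨hr, by linarith⟩
    have h'' : ¬ IntervalIntegrable f volume (-r) r := fun hint ↦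
      h (hint.mono_set (uIcc_subset_uIcc h0 right_mem_uIcc))
    rw [intervalIntegral.integral_undef h, intervalIntegral.integral_undef h'', smul_zero]

lemma fourier_cexp_neg_mul_abs {a : ℂ} (ha : 0 < a.re) (w : ℝ) :
    𝓕 (fun x : ℝ ↦ Complex.exp (-a * |x|)) w = 2 * a / ((2 * π * w) ^ 2 + a ^ 2) := by
  have hplus : 0 < (a - 2 * π * w * Complex.I).re := by simpa using ha
  have hminus : (-a - 2 * π * w * Complex.I).re < 0 := by simpa using ha
  have hIic : EqOn (fun x : ℝ ↦ Complex.exp (↑(-2 * π * x * w) * Complex.I) •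
      Complex.exp (-a * |x|)) (fun x ↦ Complex.exp ((a - 2 * π * w * Complex.I) * x)) (Iic 0) := by
    intro x hx
    simp only [smul_eq_mul, ← Complex.exp_add, abs_of_nonpos (mem_Iic.1 hx)]
    push_cast
    ring_nf
  have hIoi : EqOn (fun x : ℝ ↦ Complex.exp (↑(-2 * π * x * w) * Complex.I) •
      Complex.exp (-a * |x|)) (fun x ↦ Complex.exp ((-a - 2 * π * w * Complex.I) * x)) (Ioi 0) := by
    intro x hx
    simp only [smul_eq_mul, ← Complex.exp_add, abs_of_pos (mem_Ioi.1 hx)]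
    push_cast
    ring_nf
  rw [Real.fourier_real_eq_integral_exp_smul, ← intervalIntegral.integral_Iic_add_Ioi
    ((integrableOn_congr_fun hIic measurableSet_Iic).2 (integrableOn_exp_mul_complex_Iic hplus 0))
    ((integrableOn_congr_fun hIoi measurableSet_Ioi).2 (integrableOn_exp_mul_complex_Ioi hminus 0)),
    setIntegral_congr_fun measurableSet_Iic hIic, setIntegral_congr_fun measurableSet_Ioi hIoi,
    integral_exp_mul_complex_Iic hplus, integral_exp_mul_complex_Ioi hminus]
  have hplus_ne : a - 2 * π * w * Complex.I ≠ 0 := fun h ↦ by simp [h] at hplus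
  have hminus_ne : -a - 2 * π * w * Complex.I ≠ 0 := fun h ↦ by simp [h] at hminus
  have hfactor : (2 * π * w) ^ 2 + a ^ 2
      = -((a - 2 * π * w * Complex.I) * (-a - 2 * π * w * Complex.I)) := by
    linear_combination ((2 * π * w) ^ 2 : ℂ) * Complex.I_sq
  rw [hfactor]
  simp only [Complex.ofReal_zero, mul_zero, Complex.exp_zero]
  field_simp
  ring

lemma integrable_cexp_neg_mul_abs {a : ℂ} (ha : 0 < a.re) :
    Integrable (fun x : ℝ ↦ Complex.exp (-a * |x|)) := by
  rw [← integrableOn_univ, ← Iic_union_Ioi (a := 0)]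
  refine IntegrableOn.union ?_ ?_
  · refine (integrableOn_exp_mul_complex_Iic ha 0).congr_fun (fun x hx ↦ ?_) measurableSet_Iic
    simp [abs_of_nonpos (mem_Iic.1 hx)]
  · refine (integrableOn_exp_mul_complex_Ioi (a := -a) (by simpa using ha) 0).congr_fun
      (fun x hx ↦ ?_) measurableSet_Ioi
    simp [abs_of_pos (mem_Ioi.1 hx)]

lemma integrable_inv_sq_add_sq {a : ℝ} (ha : a ≠ 0) :
    Integrable fun x : ℝ ↦ (x ^ 2 + a ^ 2)⁻¹ := by
  refine ((integrable_inv_one_add_sq.comp_div ha).const_mul (a ^ 2)⁻¹).congr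
    (.of_forall fun x ↦ ?_)
  simp only [← mul_inv]
  field_simp
  ring

lemma integral_cexp_mul_inv_sq_add_sq {a : ℝ} (ha : 0 < a) (t : ℝ) :
    ∫ x : ℝ, Complex.exp (↑(x * t) * Complex.I) * ((x ^ 2 + a ^ 2)⁻¹ : ℝ)
      = ↑(π / a * Real.exp (-a * |t|)) := by
  have hfourier : 𝓕 (fun x : ℝ ↦ Complex.exp (-(a : ℂ) * |x|))
      = fun w : ℝ ↦ (2 * a * (((2 * π * w) ^ 2 + a ^ 2)⁻¹ : ℝ) : ℂ) := by
    ext w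
    rw [fourier_cexp_neg_mul_abs (by simpa using ha)]
    push_cast
    rw [div_eq_mul_inv]
  have hint : Integrable (𝓕 (fun x : ℝ ↦ Complex.exp (-(a : ℂ) * |x|))) := by
    rw [hfourier]
    exact ((integrable_inv_sq_add_sq ha.ne').comp_mul_left' (by positivity)).ofReal.const_mul _
  have hinv := congrFun (Continuous.fourierInv_fourier_eq (by fun_prop)
    (integrable_cexp_neg_mul_abs (by simpa using ha)) hint) t
  let φ : ℝ → ℂ := fun x ↦ Complex.exp (↑(x * t) * Complex.I) * ((x ^ 2 + a ^ 2)⁻¹ : ℝ)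
  have hscale : ∀ v : ℝ, Complex.exp (↑(2 * π * inner ℝ v t) * Complex.I) •
      (2 * a * (((2 * π * v) ^ 2 + a ^ 2)⁻¹ : ℝ) : ℂ) = 2 * a * φ (2 * π * v) := by
    intro v
    simp only [φ, smul_eq_mul, RCLike.inner_apply, conj_trivial]
    ring_nf
  rw [hfourier, Real.fourierInv_eq'] at hinv
  simp_rw [hscale] at hinv
  rw [integral_const_mul, Measure.integral_comp_mul_left φ, abs_of_pos (by positivity)] at hinv
  have ha' : (a : ℂ) ≠ 0 := by exact_mod_cast ha.ne'
  have hπ : (π : ℂ) ≠ 0 := by exact_mod_cast Real.pi_ne_zero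
  change ∫ x, φ x = _
  push_cast
  rw [← hinv, Complex.real_smul]
  push_cast
  field_simp

lemma integral_inv_sq_add_sq_mul_cos {a : ℝ} (ha : 0 < a) (t : ℝ) :
    ∫ x : ℝ, (x ^ 2 + a ^ 2)⁻¹ * Real.cos (x * t) = π / a * Real.exp (-a * |t|) := by
  have hint : Integrable fun x : ℝ ↦
      Complex.exp (↑(x * t) * Complex.I) * ((x ^ 2 + a ^ 2)⁻¹ : ℝ) := by
    refine (integrable_inv_sq_add_sq ha.ne').ofReal.bdd_mul (c := 1) (by fun_prop)
      (.of_forall fun x ↦ ?_)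
    rw [Complex.norm_exp_ofReal_mul_I]
  calc ∫ x : ℝ, (x ^ 2 + a ^ 2)⁻¹ * Real.cos (x * t)
      = ∫ x : ℝ, (Complex.exp (↑(x * t) * Complex.I) * ((x ^ 2 + a ^ 2)⁻¹ : ℝ)).re := by
        simp_rw [Complex.re_mul_ofReal, Complex.exp_ofReal_mul_I_re, mul_comm]
    _ = (∫ x : ℝ, Complex.exp (↑(x * t) * Complex.I) * ((x ^ 2 + a ^ 2)⁻¹ : ℝ)).re :=
        integral_re hint
    _ = π / a * Real.exp (-a * |t|) := by
        rw [integral_cexp_mul_inv_sq_add_sq ha, Complex.ofReal_re]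

lemma tendsto_integral_inv_sq_add_sq_mul_cos {a : ℝ} (ha : 0 < a) (t : ℝ) :
    Tendsto (fun R ↦ ∫ x in (0 : ℝ)..R, (x ^ 2 + a ^ 2)⁻¹ * Real.cos (x * t)) atTop
      (𝓝 (π / (2 * a) * Real.exp (-a * |t|))) := by
  have hint : Integrable fun x : ℝ ↦ (x ^ 2 + a ^ 2)⁻¹ * Real.cos (x * t) :=
    (integrable_inv_sq_add_sq ha.ne').mul_bdd (c := 1) (by fun_prop)
      (.of_forall fun x ↦ Real.abs_cos_le_one _)
  have heven (x : ℝ) : (|x| ^ 2 + a ^ 2)⁻¹ * Real.cos (|x| * t)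
      = (x ^ 2 + a ^ 2)⁻¹ * Real.cos (x * t) := by
    rw [sq_abs]
    rcases abs_choice x with h | h <;> simp [h]
  have hhalf : ∫ x in Ioi (0 : ℝ), (x ^ 2 + a ^ 2)⁻¹ * Real.cos (x * t)
      = π / (2 * a) * Real.exp (-a * |t|) := by
    have := integral_comp_abs (f := fun x ↦ (x ^ 2 + a ^ 2)⁻¹ * Real.cos (x * t))
    simp_rw [heven, integral_inv_sq_add_sq_mul_cos ha] at this
    rw [mul_comm 2 a, ← div_div]
    linarith
  rw [← hhalf]
  exact intervalIntegral_tendsto_integral_Ioi 0 hint.integrableOn tendsto_id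

lemma complex_cot_two_mul (z : ℂ) :
    Complex.cot (2 * z) = (Complex.cot z - Complex.tan z) / 2 := by
  rw [Complex.cot, Complex.cot, Complex.tan, Complex.sin_two_mul, Complex.cos_two_mul']
  by_cases hs : Complex.sin z = 0
  · simp [hs]
  by_cases hc : Complex.cos z = 0
  · simp [hc]
  field_simp

lemma hasSum_cotTerm {z : ℂ} (hz : z ∈ Complex.integerComplement) :
    HasSum (cotTerm z) (π * Complex.cot (π * z) - 1 / z) := by
  rw [cot_series_rep' hz]
  exact (summable_cotTerm hz).hasSum

lemma hasSum_cotTerm_two_mul_even {z : ℂ} (hz : 2 * z ∈ Complex.integerComplement) :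
    HasSum (fun k : ℕ ↦ cotTerm (2 * z) (2 * k)) (-(π / 2 * Complex.tan (π * z))) := by
  have hz' : z ∈ Complex.integerComplement := by
    rintro ⟨n, rfl⟩
    exact hz ⟨2 * n, by push_cast; rfl⟩
  have hodd : HasSum (fun k : ℕ ↦ cotTerm (2 * z) (2 * k + 1))
      ((π * Complex.cot (π * z) - 1 / z) / 2) := by
    refine ((hasSum_cotTerm hz').div_const 2).congr_fun fun k ↦ ?_
    have hsub : 2 * z - (((2 * k + 1 : ℕ) : ℂ) + 1) = 2 * (z - (k + 1)) := by push_cast; ring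
    have hadd : 2 * z + (((2 * k + 1 : ℕ) : ℂ) + 1) = 2 * (z + (k + 1)) := by push_cast; ring
    simp only [cotTerm, hsub, hadd, one_div, mul_inv]
    ring
  have heven : Summable fun k : ℕ ↦ cotTerm (2 * z) (2 * k) :=
    (summable_cotTerm hz).comp_injective (mul_right_injective₀ two_ne_zero)
  have htotal := (hasSum_cotTerm hz).unique (heven.hasSum.even_add_odd hodd)
  convert! heven.hasSum using 1
  rw [eq_sub_of_add_eq htotal.symm, mul_left_comm, complex_cot_two_mul, one_div, mul_inv]
  ring

lemma hasSum_tanh (y : ℝ) :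
    HasSum (fun k : ℕ ↦ 2 * y * (y ^ 2 + ((2 * k + 1) * π / 2) ^ 2)⁻¹) (Real.tanh y) := by
  rcases eq_or_ne y 0 with rfl | hy
  · simp
  have hπ : (π : ℂ) ≠ 0 := by exact_mod_cast Real.pi_ne_zero
  have hmem : 2 * (y / π * Complex.I) ∈ Complex.integerComplement := by
    rintro ⟨n, hn⟩
    have him : 2 * (y / π) = 0 := by
      simpa [← Complex.ofReal_div] using (congrArg Complex.im hn).symm
    exact hy (by simpa [Real.pi_ne_zero] using him)
  have harg : π * (y / π * Complex.I) = y * Complex.I := by field_simp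
  have htan := (hasSum_cotTerm_two_mul_even hmem).mul_left (2 / π * Complex.I)
  rw [harg, Complex.tan_mul_I] at htan
  rw [← Complex.hasSum_ofReal]
  convert! htan using 1
  · ext k
    have hprod : (2 * (y / π * Complex.I) + (↑(2 * k) + 1)) *
        (2 * (y / π * Complex.I) - (↑(2 * k) + 1))
        = -((2 / π) ^ 2 * (y ^ 2 + ((2 * k + 1) * π / 2) ^ 2)) := by
      push_cast
      field_simp
      linear_combination (4 * y ^ 2 : ℂ) * Complex.I_sq
    have hden : (y ^ 2 + ((2 * k + 1) * π / 2) ^ 2 : ℂ) ≠ 0 := by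
      exact_mod_cast (by positivity : y ^ 2 + ((2 * k + 1) * π / 2) ^ 2 ≠ 0)
    rw [cotTerm_identity hmem, hprod]
    push_cast
    generalize (y ^ 2 + ((2 * k + 1) * π / 2) ^ 2 : ℂ) = D at hden ⊢
    field_simp
    linear_combination (y : ℂ) * Complex.I_sq
  · push_cast
    field_simp
    simp

lemma hasSum_log_exp_add_one_div_exp_sub_one {x : ℝ} (hx : 0 < x) :
    HasSum (fun k : ℕ ↦ 2 / (2 * k + 1) * Real.exp (-((2 * k + 1) * x)))
      (Real.log ((Real.exp x + 1) / (Real.exp x - 1))) := by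
  have hexp : 1 < Real.exp x := Real.one_lt_exp_iff.2 hx
  have hq : Real.exp (-x) < 1 := Real.exp_lt_one_iff.2 (neg_neg_of_pos hx)
  have hlog := Real.hasSum_log_sub_log_of_abs_lt_one (by rwa [Real.abs_exp])
  convert! hlog using 1
  · ext k
    rw [← Real.exp_nat_mul]
    push_cast
    ring_nf
  · rw [← Real.log_div (by positivity) (by linarith), Real.exp_neg]
    congr 1
    have : Real.exp x - 1 ≠ 0 := by linarith
    field_simp

/-- The `k`-th positive fermionic Matsubara frequency `(2k + 1)π / β` at inverse temperature `β`;
`± i` times these are the poles of `ω ↦ qbpFtilde β ω`, used to expand it in partial fractions. -/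
noncomputable def matsubaraFreq (β : ℝ) (k : ℕ) : ℝ := (2 * k + 1) * π / β

lemma matsubaraFreq_pos {β : ℝ} (hβ : 0 < β) (k : ℕ) : 0 < matsubaraFreq β k := by
  unfold matsubaraFreq
  positivity

lemma summable_inv_matsubaraFreq_sq (β : ℝ) : Summable fun k ↦ (matsubaraFreq β k ^ 2)⁻¹ := by
  have hodd : Function.Injective fun k : ℕ ↦ 2 * k + 1 := fun _ _ h ↦ by simpa using h
  have hsq : Summable fun n : ℕ ↦ ((n : ℝ) ^ 2)⁻¹ := Real.summable_nat_pow_inv.2 one_lt_two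
  refine ((hsq.comp_injective hodd).mul_left ((β / π) ^ 2)).congr fun k ↦ ?_
  simp only [matsubaraFreq, Function.comp_apply]
  push_cast
  field_simp

lemma qbpFtilde_even (β : ℝ) : Function.Even (qbpFtilde β) := fun ω ↦ by
  simp only [qbpFtilde, neg_eq_zero, mul_neg, neg_div _ (β * ω), Real.tanh_neg, neg_div_neg_eq]

lemma hasSum_qbpFtilde {β ω : ℝ} (hβ : β ≠ 0) (hω : ω ≠ 0) :
    HasSum (fun k ↦ 8 / β ^ 2 * (ω ^ 2 + matsubaraFreq β k ^ 2)⁻¹) (qbpFtilde β ω) := by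
  rw [qbpFtilde, if_neg hω]
  refine ((hasSum_tanh (β * ω / 2)).div_const (β * ω / 2)).congr_fun fun k ↦ ?_
  have hfreq : (2 * k + 1) * π / 2 = β / 2 * matsubaraFreq β k := by
    rw [matsubaraFreq]
    field_simp
  have hden : (β * ω / 2) ^ 2 + ((2 * k + 1) * π / 2) ^ 2
      = (β / 2) ^ 2 * (ω ^ 2 + matsubaraFreq β k ^ 2) := by
    rw [hfreq]
    ring
  rw [hden]
  field_simp
  ring

lemma hasSum_arakiF {β t : ℝ} (hβ : 0 < β) (ht : t ≠ 0) :
    HasSum (fun k ↦ 4 / (β ^ 2 * matsubaraFreq β k) * Real.exp (-matsubaraFreq β k * |t|))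
      (arakiF β t) := by
  have hx : 0 < π * |t| / β := by positivity
  refine ((hasSum_log_exp_add_one_div_exp_sub_one hx).mul_left (2 / (β * π))).congr_fun
    fun k ↦ ?_
  have hexp : -matsubaraFreq β k * |t| = -((2 * k + 1) * (π * |t| / β)) := by
    rw [matsubaraFreq]
    ring
  rw [hexp, matsubaraFreq]
  field_simp
  ring

lemma antitoneOn_inv_sq_add_sq {a : ℝ} (ha : a ≠ 0) :
    AntitoneOn (fun x : ℝ ↦ (x ^ 2 + a ^ 2)⁻¹) (Ici 0) := by
  intro x hx y _ hxy
  have : 0 ≤ x := hx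
  dsimp only
  gcongr

lemma tendsto_integral_qbpFtilde_mul_cos {β t : ℝ} (hβ : 0 < β) (ht : t ≠ 0) :
    Tendsto (fun R ↦ ∫ ω in (0 : ℝ)..R, qbpFtilde β ω * Real.cos (ω * t)) atTop
      (𝓝 (π * arakiF β t)) := by
  have ha := matsubaraFreq_pos hβ
  have hterm (k : ℕ) : Tendsto (fun R ↦ ∫ ω in (0 : ℝ)..R,
      (8 / β ^ 2 * (ω ^ 2 + matsubaraFreq β k ^ 2)⁻¹) • Real.cos (ω * t)) atTop
      (𝓝 (π * (4 / (β ^ 2 * matsubaraFreq β k) * Real.exp (-matsubaraFreq β k * |t|)))) := by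
    simp_rw [smul_eq_mul, mul_assoc, intervalIntegral.integral_const_mul]
    convert! (tendsto_integral_inv_sq_add_sq_mul_cos (ha k) t).const_mul (8 / β ^ 2) using 2
    field_simp
    ring
  have hsin (x : ℝ) : HasDerivAt (fun x ↦ Real.sin (x * t) / t) (Real.cos (x * t)) x := by
    simpa [ht] using ((hasDerivAt_mul_const t).sin.div_const t : HasDerivAt _ _ x)
  have hbound (x : ℝ) : ‖Real.sin (x * t) / t‖ ≤ 1 / |t| := by
    rw [norm_div, Real.norm_eq_abs, Real.norm_eq_abs]
    gcongr
    exact Real.abs_sin_le_one _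
  rw [← ((hasSum_arakiF hβ ht).mul_left π).tsum_eq]
  refine tendsto_integral_smul_deriv_of_hasSum_antitoneOn
    (fun k ↦ ?_) (fun k ↦ ?_) (fun k x _ ↦ ?_) ?_ (fun ω hω ↦ hasSum_qbpFtilde hβ.ne' (ne_of_gt hω))
    (fun x _ ↦ hsin x) (fun b ↦ ?_) (fun x _ ↦ hbound x) hterm
  · have (x : ℝ) : x ^ 2 + matsubaraFreq β k ^ 2 ≠ 0 := by have := ha k; positivity
    fun_prop (disch := simp [this])
  · exact fun x hx y hy hxy ↦
      mul_le_mul_of_nonneg_left (antitoneOn_inv_sq_add_sq (ha k).ne' hx hy hxy) (by positivity)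
  · positivity
  · simpa using (summable_inv_matsubaraFreq_sq β).mul_left (8 / β ^ 2)
  · exact Continuous.intervalIntegrable (by fun_prop) _ _

/-- for `t ≠ 0`,
`lim_{R→∞} (1/(2π)) ∫_{-R}^R cos(ωt)·f̃_β(ω) dω = f_β(t)`
(the form of the inverse Fourier transform for the even function `f̃_β`). -/
theorem stmt8 (β : ℝ) (hβ : 0 < β) (t : ℝ) (ht : t ≠ 0) :
    Filter.Tendsto
      (fun R : ℝ => (1 / (2 * Real.pi)) * ∫ ω in (-R)..R, Real.cos (ω * t) * qbpFtilde β ω)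
      Filter.atTop (nhds (arakiF β t)) := by
  have heven : Function.Even fun ω ↦ Real.cos (ω * t) * qbpFtilde β ω := fun ω ↦ by
    simp only [neg_mul, Real.cos_neg, qbpFtilde_even β ω]
  convert! (tendsto_integral_qbpFtilde_mul_cos hβ ht).const_mul (1 / π) using 2 with R
  · rw [intervalIntegral_neg_self_of_even heven]
    simp_rw [smul_eq_mul, mul_comm (Real.cos _)]
    ring
  · field_simp
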